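/- arXiv:2407.09917 — 2 statements merged into one kernel-verified Lean document; each statement's English description precedes it below -/
import Mathlib

section
/- One has 1 − μ⁴T₀² ∈ (0,1), the function t is monotonically nondecreasing on [0,r₀], and t₀ ≤ t(r) < 1 for all r ∈ [0,r₀]. (Bounds on the quasi-Mach number in the proof of Lemma 2.3 of the paper; t(r) = 1/M₋²(r), so the upstream flow stays quasi-supersonic.) -/
/-!
Let `I r` be the integral from `0` to `r` of the density `w² / (τ q²)`, whose singularity at `0` is
removable because `w² = o(τ)`, and put `a = μ² T₀ = (γ - 1 + 2 t₀) / (γ + 1) ∈ (0, 1)`. Then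
`t = (γ + 1) / 2 * (√(1 - (1 - a²) e^{-(γ - 1) I}) - μ²)` increases with `I`, and `I` is
nondecreasing because the density is nonnegative. Since `I 0 = 0`, the square root starts at `a`, so
`t 0 = t₀`; it stays below `1`, and `(γ + 1) / 2 * (1 - μ²) = 1`.
-/

open Set Filter Topology MeasureTheory Asymptotics

section RemovableSingularity

variable {𝕜 : Type*} [NontriviallyNormedField 𝕜] {w : 𝕜 → 𝕜} {s : Set 𝕜}

lemma isLittleO_sq_id_of_differentiableWithinAt (hw : DifferentiableWithinAt 𝕜 w s 0)
    (hw0 : w 0 = 0) : (fun x => w x ^ 2) =o[𝓝[s] 0] fun x => x := by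
  have w_isBigO_id : w =O[𝓝[s] 0] fun x => x := by
    simpa only [hw0, sub_zero] using hw.isBigO_sub
  have w_isLittleO_one : w =o[𝓝[s] 0] (fun _ => (1 : 𝕜)) := by
    rw [isLittleO_one_iff]
    simpa only [hw0] using hw.continuousWithinAt.tendsto
  simpa only [pow_two, mul_one] using w_isBigO_id.mul_isLittleO w_isLittleO_one

lemma continuousOn_sq_div_id (hw : ContinuousOn w s) (hd : DifferentiableWithinAt 𝕜 w s 0)
    (hw0 : w 0 = 0) : ContinuousOn (fun x => w x ^ 2 / x) s := by
  intro x hx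
  rcases eq_or_ne x 0 with rfl | hx0
  · -- The junk value `w 0 ^ 2 / 0 = 0` is the limit at `0`.
    simpa only [ContinuousWithinAt, div_zero] using
      (isLittleO_sq_id_of_differentiableWithinAt hd hw0).tendsto_div_nhds_zero
  · exact ((hw x hx).pow 2).div continuousWithinAt_id hx0

lemma continuousOn_sq_div_mul_sq {q : 𝕜 → 𝕜} (hw : ContinuousOn w s)
    (hd : DifferentiableWithinAt 𝕜 w s 0) (hw0 : w 0 = 0) (hq : ContinuousOn q s)
    (hq0 : ∀ x ∈ s, q x ≠ 0) : ContinuousOn (fun x => w x ^ 2 / (x * q x ^ 2)) s := by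
  simp only [← div_div]
  exact (continuousOn_sq_div_id hw hd hw0).div (hq.pow 2) fun x hx => pow_ne_zero 2 (hq0 x hx)

end RemovableSingularity

lemma integrableOn_sq_div_mul_sq {w q : ℝ → ℝ} {r : ℝ} (hw : ContinuousOn w (Icc 0 r))
    (hd : DifferentiableWithinAt ℝ w (Icc 0 r) 0) (hw0 : w 0 = 0) (hq : ContinuousOn q (Icc 0 r))
    (hq0 : ∀ x ∈ Icc 0 r, q x ≠ 0) :
    IntegrableOn (fun τ => w τ ^ 2 / (τ * q τ ^ 2)) (Ioc 0 r) :=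
  (continuousOn_sq_div_mul_sq hw hd hw0 hq hq0).integrableOn_Icc.mono_set Ioc_subset_Icc_self

lemma sq_div_mul_sq_nonneg_ae (w q : ℝ → ℝ) (r : ℝ) :
    0 ≤ᵐ[volume.restrict (Ioc 0 r)] fun τ => w τ ^ 2 / (τ * q τ ^ 2) :=
  ae_restrict_of_forall_mem measurableSet_Ioc fun _ hτ =>
    div_nonneg (sq_nonneg _) (mul_nonneg hτ.1.le (sq_nonneg _))

lemma monotoneOn_intervalIntegral_of_nonneg_ae {μ : Measure ℝ} {f : ℝ → ℝ} {a b : ℝ}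
    (hf : IntegrableOn f (Ioc a b) μ) (hf0 : 0 ≤ᵐ[μ.restrict (Ioc a b)] f) :
    MonotoneOn (fun r => ∫ τ in a..r, f τ ∂μ) (Icc a b) := by
  intro r hr s hs hrs
  have hsub : Ioc a s ⊆ Ioc a b := Ioc_subset_Ioc_right hs.2
  exact intervalIntegral.integral_mono_interval le_rfl hr.1 hrs
    (ae_restrict_of_ae_restrict_of_subset hsub hf0)
    ((intervalIntegrable_iff_integrableOn_Ioc_of_le hs.1).2 (hf.mono_set hsub))

/-- The quasi-Mach quantity `t = 1 / M₋²` of the upstream flow, as a function of the accumulated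
value `x` of the integral in the exponent; the paper's `μ²` is written out as
`(γ - 1) / (γ + 1)`. -/
noncomputable def quasiMach (γ T₀ x : ℝ) : ℝ :=
  (γ + 1) / 2 * (√(1 - (1 - ((γ - 1) / (γ + 1)) ^ 2 * T₀ ^ 2) * Real.exp (-(γ - 1) * x)) -
    (γ - 1) / (γ + 1))

namespace quasiMach

variable {γ T₀ : ℝ}

lemma coeff_mem_Ioo (hγ : 1 < γ) (hT₀ : 0 < T₀) (hT₀' : (γ - 1) * T₀ < γ + 1) :
    1 - ((γ - 1) / (γ + 1)) ^ 2 * T₀ ^ 2 ∈ Ioo (0 : ℝ) 1 := by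
  have hadd : 0 < γ + 1 := by linarith
  have ratio_pos : 0 < (γ - 1) / (γ + 1) * T₀ :=
    mul_pos (div_pos (sub_pos.2 hγ) hadd) hT₀
  have ratio_lt_one : (γ - 1) / (γ + 1) * T₀ < 1 := by
    rwa [div_mul_eq_mul_div, div_lt_one hadd]
  rw [← mul_pow]
  exact ⟨sub_pos.2 (pow_lt_one₀ ratio_pos.le ratio_lt_one two_ne_zero),
    sub_lt_self 1 (pow_pos ratio_pos 2)⟩

lemma apply_zero (hγ : 1 ≤ γ) (hT₀ : 0 ≤ T₀) :
    quasiMach γ T₀ 0 = (γ - 1) / 2 * (T₀ - 1) := by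
  have hadd : 0 < γ + 1 := by linarith
  have ratio_nonneg : 0 ≤ (γ - 1) / (γ + 1) * T₀ :=
    mul_nonneg (div_nonneg (sub_nonneg.2 hγ) hadd.le) hT₀
  rw [quasiMach, mul_zero, Real.exp_zero, mul_one, sub_sub_cancel, ← mul_pow,
    Real.sqrt_sq ratio_nonneg]
  field_simp

lemma monotone (hγ : 1 ≤ γ) (hcoeff : 0 ≤ 1 - ((γ - 1) / (γ + 1)) ^ 2 * T₀ ^ 2) :
    Monotone (quasiMach γ T₀) := by
  intro x y hxy
  have hexp : -(γ - 1) * y ≤ -(γ - 1) * x :=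
    mul_le_mul_of_nonpos_left hxy (neg_nonpos.2 (sub_nonneg.2 hγ))
  unfold quasiMach
  gcongr

lemma lt_one (hγ : -1 < γ) (hcoeff : 0 < 1 - ((γ - 1) / (γ + 1)) ^ 2 * T₀ ^ 2) (x : ℝ) :
    quasiMach γ T₀ x < 1 := by
  have hadd : 0 < γ + 1 := by linarith
  have sqrt_lt_one :
      √(1 - (1 - ((γ - 1) / (γ + 1)) ^ 2 * T₀ ^ 2) * Real.exp (-(γ - 1) * x)) < 1 := by
    rw [Real.sqrt_lt' one_pos, one_pow]
    exact sub_lt_self 1 (mul_pos hcoeff (Real.exp_pos _))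
  calc quasiMach γ T₀ x
      < (γ + 1) / 2 * (1 - (γ - 1) / (γ + 1)) := by unfold quasiMach; gcongr
    _ = 1 := by field_simp; ring

end quasiMach

theorem stmt_2_general {γ r₀ t₀ μ2 T₀ : ℝ} (hγ : 1 < γ) (ht₀ : t₀ ∈ Ioo ((1 - γ) / 2) 1)
    (hμ2 : μ2 = (γ - 1) / (γ + 1)) (hT₀ : T₀ = 1 + 2 * t₀ / (γ - 1)) {f t : ℝ → ℝ}
    (hf : IntegrableOn f (Ioc 0 r₀)) (hf0 : 0 ≤ᵐ[volume.restrict (Ioc 0 r₀)] f)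
    (ht : ∀ r, t r = ((γ + 1) / 2) *
      (√(1 - (1 - μ2 ^ 2 * T₀ ^ 2) * Real.exp (-(γ - 1) * ∫ τ in (0 : ℝ)..r, f τ)) - μ2)) :
    1 - μ2 ^ 2 * T₀ ^ 2 ∈ Ioo (0 : ℝ) 1 ∧ MonotoneOn t (Icc 0 r₀) ∧
      ∀ r ∈ Icc 0 r₀, t₀ ≤ t r ∧ t r < 1 := by
  subst hμ2
  have hsub : 0 < γ - 1 := sub_pos.2 hγ
  have scaled_T₀ : (γ - 1) * T₀ = γ - 1 + 2 * t₀ := by rw [hT₀]; field_simp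
  have T₀_pos : 0 < T₀ := pos_of_mul_pos_right (by linarith [ht₀.1]) hsub.le
  have coeff_mem := quasiMach.coeff_mem_Ioo hγ T₀_pos (by linarith [ht₀.2])
  have t_eq (r : ℝ) : t r = quasiMach γ T₀ (∫ τ in (0 : ℝ)..r, f τ) := ht r
  have t_zero : t 0 = t₀ := by
    rw [t_eq, intervalIntegral.integral_same, quasiMach.apply_zero hγ.le T₀_pos.le]
    linarith
  have t_mono : MonotoneOn t (Icc 0 r₀) := by
    rw [funext t_eq]
    exact (quasiMach.monotone hγ.le coeff_mem.1.le).comp_monotoneOn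
      (monotoneOn_intervalIntegral_of_nonneg_ae hf hf0)
  refine ⟨coeff_mem, t_mono, fun r hr => ⟨?_, ?_⟩⟩
  · exact t_zero ▸ t_mono ⟨le_rfl, hr.1.trans hr.2⟩ hr hr.1
  · exact t_eq r ▸ quasiMach.lt_one (by linarith) coeff_mem.1 _

/-- Bounds on the quasi-Mach quantity in the proof of Lemma 2.3:
`1 - μ⁴T₀² ∈ (0,1)`, `t` is monotone nondecreasing, and `t₀ ≤ t r < 1`. -/
theorem stmt_2 (γ r₀ t₀ μ2 T₀ : ℝ) (hγ : 1 < γ) (hr₀ : 0 < r₀)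
    (ht₀ : t₀ ∈ Set.Ioo (0:ℝ) 1)
    (hμ2 : μ2 = (γ - 1) / (γ + 1)) (hT₀ : T₀ = 1 + 2 * t₀ / (γ - 1))
    (w q t : ℝ → ℝ)
    (hw : ContDiffOn ℝ 1 w (Set.Icc 0 r₀))
    (hq : ContDiffOn ℝ 1 q (Set.Icc 0 r₀))
    (hw0 : w 0 = 0)
    (hqpos : ∀ r ∈ Set.Icc (0:ℝ) r₀, 0 < q r)
    (ht : ∀ r, t r = ((γ + 1) / 2) *
      (Real.sqrt (1 - (1 - μ2 ^ 2 * T₀ ^ 2) *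
        Real.exp (-(γ - 1) * ∫ τ in (0:ℝ)..r, (w τ) ^ 2 / (τ * (q τ) ^ 2))) - μ2)) :
    (1 - μ2 ^ 2 * T₀ ^ 2) ∈ Set.Ioo (0:ℝ) 1 ∧
    MonotoneOn t (Set.Icc 0 r₀) ∧
    ∀ r ∈ Set.Icc (0:ℝ) r₀, t₀ ≤ t r ∧ t r < 1 :=
  stmt_2_general hγ ⟨by linarith [ht₀.1], ht₀.2⟩ hμ2 hT₀
    (integrableOn_sq_div_mul_sq hw.continuousOn
      (hw.differentiableOn one_ne_zero 0 ⟨le_rfl, hr₀.le⟩) hw0 hq.continuousOn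
      fun r hr => (hqpos r hr).ne')
    (sq_div_mul_sq_nonneg_ae w q r₀) ht
end

section
/- The pressure p is differentiable on (0,r₀) and satisfies ∂_r p(r) = ρ(r) w(r)²/r, the upstream quasi-Mach number satisfies M₋²(r) = ρ(r)q(r)²/(γ p(r)) = 1/t(r) > 1, and the downstream Rankine–Hugoniot state satisfies ∂_r p₊(r) = ρ₊(r) w₊(r)²/r for all r ∈ (0,r₀). (Existence part of Theorem 2.1 of the paper: the constructed special shock solution with nonzero swirl satisfies both radial momentum equations.) -/
/-!
Let `a = w² / (r q²)` and `s = q₊ / q`. Since `w` is differentiable and vanishes on the axis, `a` is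
integrable up to it. The formula for `t` says that `t = (γ + 1) / 2 * (s - μ²)`, where
`s = √(1 - (1 - s(0)²) exp (-(γ - 1) ∫ a))` solves `2 s s' = (γ - 1) a (1 - s²)`; in these terms
the two radial momentum equations read `p' = γ a p / t` and `p₊' = γ a p / (t s)`. The first is the
definition of `p`, differentiated. As `p₊ = ((1 + μ²) / t - μ²) p`, the second follows from the
first and the equation for `s` by the identity
`((1 + μ²) - μ² t) s = t + (γ - 1) / 2 * (1 - s²)`.
-/

open Real Set MeasureTheory

section Calculus

lemma continuousOn_sq_div_self {𝕜 : Type*} [NontriviallyNormedField 𝕜] {w : 𝕜 → 𝕜} {S : Set 𝕜}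
    (hw : ContinuousOn w S) (hd : DifferentiableWithinAt 𝕜 w S 0) (hw0 : w 0 = 0) :
    ContinuousOn (fun x ↦ w x ^ 2 / x) S := by
  intro x hx
  rcases eq_or_ne x 0 with rfl | hx0
  · -- Away from `0` the function is `w x` times the slope of `w` between `0` and `x`.
    have hslope := hasDerivWithinAt_iff_tendsto_slope.mp hd.hasDerivWithinAt
    have hprod := ((hw 0 hx).mono sdiff_subset).tendsto.mul hslope
    rw [hw0, zero_mul] at hprod
    rw [← continuousWithinAt_sdiff_self, ContinuousWithinAt, div_zero]
    refine hprod.congr fun y ↦ ?_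
    rw [slope_def_field, hw0]
    ring
  · exact ((hw x hx).pow 2).div continuousWithinAt_id hx0

lemma hasDerivAt_integral_of_mem_Ioo {E : Type*} [NormedAddCommGroup E] [NormedSpace ℝ E]
    [CompleteSpace E] {f : ℝ → E} {a b r : ℝ} (hint : IntervalIntegrable f volume a b)
    (hf : ContinuousOn f (Ioo a b)) (hr : r ∈ Ioo a b) :
    HasDerivAt (fun x ↦ ∫ τ in a..x, f τ) (f r) r :=
  intervalIntegral.integral_hasDerivAt_right
    (hint.mono_set (uIcc_subset_uIcc_left (Icc_subset_uIcc (Ioo_subset_Icc_self hr))))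
    (hf.stronglyMeasurableAtFilter isOpen_Ioo r hr) (hf.continuousAt (isOpen_Ioo.mem_nhds hr))

lemma hasDerivAt_mul_exp_integral {f : ℝ → ℝ} {a b c k r : ℝ}
    (hint : IntervalIntegrable f volume a b) (hf : ContinuousOn f (Ioo a b)) (hr : r ∈ Ioo a b) :
    HasDerivAt (fun x ↦ c * exp (k * ∫ τ in a..x, f τ))
      (k * f r * (c * exp (k * ∫ τ in a..r, f τ))) r :=
  (((hasDerivAt_integral_of_mem_Ioo hint hf hr).const_mul k).exp.const_mul c).congr_deriv (by ring)

end Calculus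

section SwirlDensity

/-- The density `w² / (r q²)`, whose integral drives the Mach number and the pressure. Its value
at `r = 0` is the junk value `0`. -/
noncomputable def swirlDensity (w q : ℝ → ℝ) (r : ℝ) : ℝ :=
  w r ^ 2 / (r * q r ^ 2)

variable {w q : ℝ → ℝ} {b r : ℝ}

lemma swirlDensity_nonneg (hr : 0 ≤ r) : 0 ≤ swirlDensity w q r :=
  div_nonneg (sq_nonneg _) (mul_nonneg hr (sq_nonneg _))

lemma continuousOn_swirlDensity (hw : ContinuousOn w (Ioo 0 b)) (hq : ContinuousOn q (Ioo 0 b))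
    (hq0 : ∀ x ∈ Ioo 0 b, q x ≠ 0) : ContinuousOn (swirlDensity w q) (Ioo 0 b) :=
  (hw.pow 2).div (continuousOn_id.mul (hq.pow 2))
    fun x hx ↦ mul_ne_zero hx.1.ne' (pow_ne_zero 2 (hq0 x hx))

lemma intervalIntegrable_swirlDensity (hb : 0 ≤ b) (hw : ContinuousOn w (Icc 0 b))
    (hd : DifferentiableWithinAt ℝ w (Icc 0 b) 0) (hw0 : w 0 = 0)
    (hq : ContinuousOn q (Icc 0 b)) (hq0 : ∀ x ∈ Icc 0 b, q x ≠ 0) :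
    IntervalIntegrable (swirlDensity w q) volume 0 b := by
  unfold swirlDensity
  simp only [← div_div]
  exact ((continuousOn_sq_div_self hw hd hw0).div (hq.pow 2)
    fun x hx ↦ pow_ne_zero 2 (hq0 x hx)).intervalIntegrable_of_Icc hb

end SwirlDensity

section VelocityRatio

/-- The velocity ratio `q₊ / q` across the shock as a function of `x = ∫ w² / (r q²)`: the solution
of `2 s s' = k (1 - s²)` with `s 0 = b`, for `0 ≤ b`. It is used with `k = γ - 1`. -/
noncomputable def velocityRatio (k b x : ℝ) : ℝ :=
  √(1 - (1 - b ^ 2) * exp (-k * x))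

variable {k b x : ℝ}

lemma continuous_velocityRatio : Continuous (velocityRatio k b) := by
  unfold velocityRatio
  fun_prop

lemma velocityRatio_lt_one (hb : b ^ 2 < 1) : velocityRatio k b x < 1 := by
  have : 0 < (1 - b ^ 2) * exp (-k * x) := mul_pos (sub_pos.mpr hb) (exp_pos _)
  rw [velocityRatio, sqrt_lt' one_pos]
  linarith

lemma le_velocityRatio (hb : b ^ 2 ≤ 1) (hkx : 0 ≤ k * x) : b ≤ velocityRatio k b x := by
  have hexp : exp (-k * x) ≤ 1 := by
    rw [exp_le_one_iff]
    linarith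
  have := mul_le_of_le_one_right (sub_nonneg.mpr hb) hexp
  exact le_sqrt_of_sq_le (by linarith)

lemma hasDerivAt_velocityRatio (hs : 0 < velocityRatio k b x) :
    HasDerivAt (velocityRatio k b)
      (k * (1 - velocityRatio k b x ^ 2) / (2 * velocityRatio k b x)) x := by
  have hpos : 0 < 1 - (1 - b ^ 2) * exp (-k * x) := sqrt_pos.mp hs
  have hsq : velocityRatio k b x ^ 2 = 1 - (1 - b ^ 2) * exp (-k * x) := sq_sqrt hpos.le
  have hexp : HasDerivAt (fun y ↦ exp (-k * y)) (exp (-k * x) * (-k)) x :=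
    (hasDerivAt_const_mul (-k)).exp
  refine (((hexp.const_mul (1 - b ^ 2)).const_sub 1).sqrt hpos.ne').congr_deriv ?_
  rw [hsq, velocityRatio]
  ring

end VelocityRatio

section RankineHugoniot

/-- The gas-dynamical constant `μ² = (γ - 1) / (γ + 1)`. -/
noncomputable def muSq (γ : ℝ) : ℝ :=
  (γ - 1) / (γ + 1)

/-- The value of `t = 1 / M₋²` for which the velocity ratio `q₊ / q` across the shock is `s`. -/
noncomputable def invMachSq (γ s : ℝ) : ℝ :=
  (γ + 1) / 2 * (s - muSq γ)

variable {γ : ℝ}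

lemma continuous_invMachSq : Continuous (invMachSq γ) := by
  unfold invMachSq
  fun_prop

lemma muSq_pos (hγ : 1 < γ) : 0 < muSq γ :=
  div_pos (by linarith) (by linarith)

lemma invMachSq_muSq_mul (hγ : 1 < γ) (t : ℝ) :
    invMachSq γ (muSq γ * (1 + 2 * t / (γ - 1))) = t := by
  have : γ - 1 ≠ 0 := by linarith
  have : γ + 1 ≠ 0 := by linarith
  rw [invMachSq, muSq]
  field_simp
  ring

lemma invMachSq_mem_Ioo_iff (hγ : -1 < γ) {s : ℝ} :
    invMachSq γ s ∈ Ioo 0 1 ↔ s ∈ Ioo (muSq γ) 1 := by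
  have hpos : 0 < (γ + 1) / 2 := by linarith
  have hone : invMachSq γ s - 1 = (γ + 1) / 2 * (s - 1) := by
    have : γ + 1 ≠ 0 := by linarith
    rw [invMachSq, muSq]
    field_simp
    ring
  refine and_congr ?_ ?_
  · rw [invMachSq, mul_pos_iff_of_pos_left hpos, sub_pos]
  · rw [← sub_neg, hone, ← neg_pos, ← mul_neg, mul_pos_iff_of_pos_left hpos, neg_pos, sub_neg]

lemma muSq_mul_mem_Ioo (hγ : 1 < γ) {t : ℝ} (ht : t ∈ Ioo 0 1) :
    muSq γ * (1 + 2 * t / (γ - 1)) ∈ Ioo (muSq γ) 1 := by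
  rwa [← invMachSq_mem_Ioo_iff (by linarith), invMachSq_muSq_mul hγ]

lemma velocityRatio_mem_Ioo (hγ : 1 < γ) {b x : ℝ} (hb : b ∈ Ioo (muSq γ) 1) (hx : 0 ≤ x) :
    velocityRatio (γ - 1) b x ∈ Ioo (muSq γ) 1 := by
  have hb2 : b ^ 2 < 1 := pow_lt_one₀ ((muSq_pos hγ).trans hb.1).le hb.2 two_ne_zero
  exact ⟨hb.1.trans_le (le_velocityRatio hb2.le (mul_nonneg (by linarith) hx)),
    velocityRatio_lt_one hb2⟩

lemma upstream_machSq_eq {p q : ℝ} (hp : γ * p ≠ 0) (hq : q ≠ 0) (t : ℝ) :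
    γ * p / (t * q ^ 2) * q ^ 2 / (γ * p) = 1 / t := by
  obtain ⟨hγ, hp⟩ := mul_ne_zero_iff.mp hp
  field_simp

lemma downstream_velocity_eq (hγ : 1 < γ) {q : ℝ} (hq : q ≠ 0) (s : ℝ) :
    muSq γ * (q + 2 / (γ - 1) * (invMachSq γ s * q ^ 2) / q) = q * s := by
  have : γ - 1 ≠ 0 := by linarith
  have : γ + 1 ≠ 0 := by linarith
  rw [invMachSq, muSq]
  field_simp
  ring

lemma one_add_muSq_sub_mul_invMachSq (hγ : γ + 1 ≠ 0) (s : ℝ) :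
    (1 + muSq γ - muSq γ * invMachSq γ s) * s = invMachSq γ s + (γ - 1) / 2 * (1 - s ^ 2) := by
  rw [invMachSq, muSq]
  field_simp
  ring

lemma hasDerivAt_downstream_pressure (hγ : γ + 1 ≠ 0) {s p : ℝ → ℝ} {a r : ℝ}
    (hs0 : s r ≠ 0) (ht0 : invMachSq γ (s r) ≠ 0)
    (hs : HasDerivAt s ((γ - 1) * a * (1 - s r ^ 2) / (2 * s r)) r)
    (hp : HasDerivAt p (γ * (a / invMachSq γ (s r)) * p r) r) :
    HasDerivAt (fun x ↦ ((1 + muSq γ) * (1 / invMachSq γ (s x)) - muSq γ) * p x)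
      (γ * a * p r / (invMachSq γ (s r) * s r)) r := by
  have ht : HasDerivAt (fun x ↦ invMachSq γ (s x))
      ((γ + 1) / 2 * ((γ - 1) * a * (1 - s r ^ 2) / (2 * s r))) r :=
    (hs.sub_const (muSq γ)).const_mul _
  have hratio := ((ht.fun_inv ht0).const_mul (1 + muSq γ)).sub_const (muSq γ)
  simp only [one_div]
  refine (hratio.fun_mul hp).congr_deriv ?_
  have hjump := one_add_muSq_sub_mul_invMachSq hγ (s r)
  have hμ : (1 + muSq γ) * (γ + 1) = 2 * γ := by
    rw [muSq]
    field_simp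
    ring
  generalize invMachSq γ (s r) = t at *
  field_simp
  linear_combination (4 * γ * a * p r) * hjump - (γ - 1) * (1 - s r ^ 2) * a * p r * hμ

end RankineHugoniot

section SpecialShock

/-- The velocity ratio `q₊ / q` of the special shock solution with swirl density `a = w² / (r q²)`
and value `b` on the axis. -/
noncomputable def specialVelocityRatio (γ b : ℝ) (a : ℝ → ℝ) (r : ℝ) : ℝ :=
  velocityRatio (γ - 1) b (∫ τ in (0 : ℝ)..r, a τ)

/-- The upstream inverse squared Mach number `t = 1 / M₋²` of the special shock solution. -/
noncomputable def specialInvMachSq (γ b : ℝ) (a : ℝ → ℝ) (r : ℝ) : ℝ :=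
  invMachSq γ (specialVelocityRatio γ b a r)

/-- The upstream pressure of the special shock solution with value `c` on the axis. -/
noncomputable def specialPressure (γ b c : ℝ) (a : ℝ → ℝ) (r : ℝ) : ℝ :=
  c * exp (γ * ∫ τ in (0 : ℝ)..r, a τ / specialInvMachSq γ b a τ)

variable {γ b r₀ r : ℝ} {a : ℝ → ℝ}

lemma specialVelocityRatio_mem_Ioo (hγ : 1 < γ) (hb : b ∈ Ioo (muSq γ) 1)
    (ha0 : ∀ τ ∈ Icc 0 r, 0 ≤ a τ) (hr : 0 ≤ r) :
    specialVelocityRatio γ b a r ∈ Ioo (muSq γ) 1 :=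
  velocityRatio_mem_Ioo hγ hb (intervalIntegral.integral_nonneg hr ha0)

lemma specialInvMachSq_mem_Ioo (hγ : 1 < γ) (hb : b ∈ Ioo (muSq γ) 1)
    (ha0 : ∀ τ ∈ Icc 0 r, 0 ≤ a τ) (hr : 0 ≤ r) : specialInvMachSq γ b a r ∈ Ioo 0 1 :=
  (invMachSq_mem_Ioo_iff (by linarith)).mpr (specialVelocityRatio_mem_Ioo hγ hb ha0 hr)

lemma continuousOn_specialInvMachSq (hint : IntervalIntegrable a volume 0 r₀) :
    ContinuousOn (specialInvMachSq γ b a) (uIcc 0 r₀) :=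
  (continuous_invMachSq.comp continuous_velocityRatio).comp_continuousOn
    (intervalIntegral.continuousOn_primitive_interval' hint left_mem_uIcc)

lemma hasDerivAt_specialVelocityRatio (hint : IntervalIntegrable a volume 0 r₀)
    (ha : ContinuousOn a (Ioo 0 r₀)) (hr : r ∈ Ioo 0 r₀)
    (hs : 0 < specialVelocityRatio γ b a r) :
    HasDerivAt (specialVelocityRatio γ b a)
      ((γ - 1) * a r * (1 - specialVelocityRatio γ b a r ^ 2) /
        (2 * specialVelocityRatio γ b a r)) r := by
  refine ((hasDerivAt_velocityRatio hs).comp r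
    (hasDerivAt_integral_of_mem_Ioo hint ha hr)).congr_deriv ?_
  rw [specialVelocityRatio]
  ring

lemma hasDerivAt_specialPressure (c : ℝ) (hγ : 1 < γ) (hb : b ∈ Ioo (muSq γ) 1)
    (hint : IntervalIntegrable a volume 0 r₀) (ha : ContinuousOn a (Ioo 0 r₀))
    (ha0 : ∀ τ ∈ Icc 0 r₀, 0 ≤ a τ) (hr : r ∈ Ioo 0 r₀) :
    HasDerivAt (specialPressure γ b c a)
      (γ * (a r / specialInvMachSq γ b a r) * specialPressure γ b c a r) r := by
  have hIcc : uIcc 0 r₀ = Icc 0 r₀ := uIcc_of_le (hr.1.trans hr.2).le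
  have ht_cont := continuousOn_specialInvMachSq (γ := γ) (b := b) hint
  have ht0 : ∀ x ∈ uIcc 0 r₀, specialInvMachSq γ b a x ≠ 0 := fun x hx ↦ by
    rw [hIcc] at hx
    exact (specialInvMachSq_mem_Ioo hγ hb (fun τ hτ ↦ ha0 τ ⟨hτ.1, hτ.2.trans hx.2⟩) hx.1).1.ne'
  have hint' : IntervalIntegrable (fun τ ↦ a τ / specialInvMachSq γ b a τ) volume 0 r₀ := by
    simpa only [div_eq_mul_inv, Pi.inv_apply] using hint.mul_continuousOn (ht_cont.inv₀ ht0)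
  have hsub : Ioo 0 r₀ ⊆ uIcc 0 r₀ := hIcc ▸ Ioo_subset_Icc_self
  exact hasDerivAt_mul_exp_integral hint'
    (ha.div (ht_cont.mono hsub) fun x hx ↦ ht0 x (hsub hx)) hr

lemma hasDerivAt_specialPressure_downstream (c : ℝ) (hγ : 1 < γ) (hb : b ∈ Ioo (muSq γ) 1)
    (hint : IntervalIntegrable a volume 0 r₀) (ha : ContinuousOn a (Ioo 0 r₀))
    (ha0 : ∀ τ ∈ Icc 0 r₀, 0 ≤ a τ) (hr : r ∈ Ioo 0 r₀) :
    HasDerivAt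
      (fun x ↦ ((1 + muSq γ) * (1 / specialInvMachSq γ b a x) - muSq γ) * specialPressure γ b c a x)
      (γ * a r * specialPressure γ b c a r /
        (specialInvMachSq γ b a r * specialVelocityRatio γ b a r)) r := by
  have ha0' : ∀ τ ∈ Icc 0 r, 0 ≤ a τ := fun τ hτ ↦ ha0 τ ⟨hτ.1, hτ.2.trans hr.2.le⟩
  have hs : 0 < specialVelocityRatio γ b a r :=
    (muSq_pos hγ).trans (specialVelocityRatio_mem_Ioo hγ hb ha0' hr.1.le).1
  exact hasDerivAt_downstream_pressure (by linarith) hs.ne'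
    (specialInvMachSq_mem_Ioo hγ hb ha0' hr.1.le).1.ne'
    (hasDerivAt_specialVelocityRatio hint ha hr hs)
    (hasDerivAt_specialPressure c hγ hb hint ha ha0 hr)

end SpecialShock

theorem stmt_5_general (γ r₀ t₀ p₀ μ2 T₀ : ℝ) (hγ : 1 < γ)
    (ht₀ : t₀ ∈ Ioo (0 : ℝ) 1) (hp₀ : p₀ ≠ 0)
    (hμ2 : μ2 = (γ - 1) / (γ + 1)) (hT₀ : T₀ = 1 + 2 * t₀ / (γ - 1))
    (w q t p ρ c2 M2 pp qp ρp wp : ℝ → ℝ)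
    (hw : ContinuousOn w (Ioo 0 r₀)) (hq : ContinuousOn q (Ioo 0 r₀))
    (hq0 : ∀ r ∈ Ioo 0 r₀, q r ≠ 0)
    (hint : IntervalIntegrable (swirlDensity w q) volume 0 r₀)
    (ht : ∀ r, t r = ((γ + 1) / 2) *
      (√(1 - (1 - μ2 ^ 2 * T₀ ^ 2) *
        exp (-(γ - 1) * ∫ τ in (0 : ℝ)..r, w τ ^ 2 / (τ * q τ ^ 2))) - μ2))
    (hp : ∀ r, p r = p₀ * exp (γ * ∫ τ in (0 : ℝ)..r, w τ ^ 2 / (τ * t τ * q τ ^ 2)))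
    (hρ : ∀ r, ρ r = γ * p r / (t r * q r ^ 2))
    (hc2 : ∀ r, c2 r = γ * p r / ρ r)
    (hM2 : ∀ r, M2 r = ρ r * q r ^ 2 / (γ * p r))
    (hpp : ∀ r, pp r = ((1 + μ2) * M2 r - μ2) * p r)
    (hqp : ∀ r, qp r = μ2 * (q r + (2 / (γ - 1)) * c2 r / q r))
    (hρp : ∀ r, ρp r = ρ r * q r / qp r)
    (hwp : ∀ r, wp r = w r) {r : ℝ} (hr : r ∈ Ioo 0 r₀) :
    HasDerivAt p (ρ r * w r ^ 2 / r) r ∧ (M2 r = 1 / t r ∧ 1 < M2 r) ∧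
      HasDerivAt pp (ρp r * wp r ^ 2 / r) r := by
  obtain rfl : μ2 = muSq γ := hμ2
  have hb : muSq γ * T₀ ∈ Ioo (muSq γ) 1 := hT₀ ▸ muSq_mul_mem_Ioo hγ ht₀
  set a := swirlDensity w q with ha_def
  have ha : ContinuousOn a (Ioo 0 r₀) := continuousOn_swirlDensity hw hq hq0
  have ha0 x : ∀ τ ∈ Icc 0 x, 0 ≤ a τ := fun τ hτ ↦ swirlDensity_nonneg hτ.1
  obtain rfl : t = specialInvMachSq γ (muSq γ * T₀) a := by
    ext x
    rw [ht, ← mul_pow]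
    rfl
  obtain rfl : p = specialPressure γ (muSq γ * T₀) p₀ a := by
    ext x
    simp only [hp, specialPressure, ha_def, swirlDensity, div_div, mul_right_comm]
  have hγp x : γ * specialPressure γ (muSq γ * T₀) p₀ a x ≠ 0 :=
    mul_ne_zero (by linarith) (mul_ne_zero hp₀ (exp_ne_zero _))
  have hM2_eq x (hx : x ∈ Ioo 0 r₀) : M2 x = 1 / specialInvMachSq γ (muSq γ * T₀) a x := by
    rw [hM2, hρ, upstream_machSq_eq (hγp x) (hq0 x hx)]
  have hqp_eq : qp r = q r * specialVelocityRatio γ (muSq γ * T₀) a r := by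
    rw [hqp, hc2, hρ, div_div_cancel₀ (hγp r)]
    exact downstream_velocity_eq hγ (hq0 r hr) _
  refine ⟨?_, ⟨hM2_eq r hr, ?_⟩, ?_⟩
  · refine (hasDerivAt_specialPressure p₀ hγ hb hint ha (ha0 r₀) hr).congr_deriv ?_
    rw [hρ, ha_def, swirlDensity]
    ring
  · have ht_mem := specialInvMachSq_mem_Ioo hγ hb (ha0 r) hr.1.le
    exact (one_lt_one_div ht_mem.1 ht_mem.2).trans_eq (hM2_eq r hr).symm
  · refine ((hasDerivAt_specialPressure_downstream p₀ hγ hb hint ha (ha0 r₀) hr)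
      |>.congr_of_eventuallyEq ?_).congr_deriv ?_
    · filter_upwards [isOpen_Ioo.mem_nhds hr] with x hx
      rw [hpp, hM2_eq x hx]
    · have := hq0 r hr
      rw [hρp, hqp_eq, hρ, hwp, ha_def, swirlDensity]
      field_simp

/-- Existence part of Theorem 2.1: the constructed special shock solution with
nonzero swirl satisfies the upstream radial momentum equation, is
quasi-supersonic (`M₋² = 1/t > 1`), and the downstream Rankine–Hugoniot state
satisfies the downstream radial momentum equation. -/
theorem stmt_5 (γ r₀ t₀ p₀ μ2 T₀ : ℝ) (hγ : 1 < γ) (hr₀ : 0 < r₀)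
    (ht₀ : t₀ ∈ Set.Ioo (0:ℝ) 1) (hp₀ : 0 < p₀)
    (hμ2 : μ2 = (γ - 1) / (γ + 1)) (hT₀ : T₀ = 1 + 2 * t₀ / (γ - 1))
    (w q t p ρ c2 M2 pp qp ρp wp : ℝ → ℝ)
    (hw : ContDiffOn ℝ 1 w (Set.Icc 0 r₀))
    (hq : ContDiffOn ℝ 1 q (Set.Icc 0 r₀))
    (hw0 : w 0 = 0)
    (hqpos : ∀ r ∈ Set.Icc (0:ℝ) r₀, 0 < q r)
    (ht : ∀ r, t r = ((γ + 1) / 2) *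
      (Real.sqrt (1 - (1 - μ2 ^ 2 * T₀ ^ 2) *
        Real.exp (-(γ - 1) * ∫ τ in (0:ℝ)..r, (w τ) ^ 2 / (τ * (q τ) ^ 2))) - μ2))
    (hp : ∀ r, p r = p₀ *
      Real.exp (γ * ∫ τ in (0:ℝ)..r, (w τ) ^ 2 / (τ * t τ * (q τ) ^ 2)))
    (hρ : ∀ r, ρ r = γ * p r / (t r * (q r) ^ 2))
    (hc2 : ∀ r, c2 r = γ * p r / ρ r)
    (hM2 : ∀ r, M2 r = ρ r * (q r) ^ 2 / (γ * p r))
    (hpp : ∀ r, pp r = ((1 + μ2) * M2 r - μ2) * p r)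
    (hqp : ∀ r, qp r = μ2 * (q r + (2 / (γ - 1)) * c2 r / q r))
    (hρp : ∀ r, ρp r = ρ r * q r / qp r)
    (hwp : ∀ r, wp r = w r) :
    (∀ r ∈ Set.Ioo (0:ℝ) r₀,
      DifferentiableAt ℝ p r ∧ deriv p r = ρ r * (w r) ^ 2 / r) ∧
    (∀ r ∈ Set.Ioo (0:ℝ) r₀, M2 r = 1 / t r ∧ 1 < M2 r) ∧
    (∀ r ∈ Set.Ioo (0:ℝ) r₀, deriv pp r = ρp r * (wp r) ^ 2 / r) := by
  have hsub : Set.Ioo 0 r₀ ⊆ Set.Icc 0 r₀ := Set.Ioo_subset_Icc_self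
  have hint : IntervalIntegrable (swirlDensity w q) volume 0 r₀ :=
    intervalIntegrable_swirlDensity hr₀.le hw.continuousOn
      (hw.differentiableOn one_ne_zero 0 (Set.left_mem_Icc.mpr hr₀.le)) hw0 hq.continuousOn
      fun x hx ↦ (hqpos x hx).ne'
  have hsol r (hr : r ∈ Set.Ioo 0 r₀) :=
    stmt_5_general γ r₀ t₀ p₀ μ2 T₀ hγ ht₀ hp₀.ne' hμ2 hT₀ w q t p ρ c2 M2 pp qp ρp wp
      (hw.continuousOn.mono hsub) (hq.continuousOn.mono hsub) (fun x hx ↦ (hqpos x (hsub hx)).ne')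
      hint ht hp hρ hc2 hM2 hpp hqp hρp hwp hr
  exact ⟨fun r hr ↦ ⟨(hsol r hr).1.differentiableAt, (hsol r hr).1.deriv⟩,
    fun r hr ↦ (hsol r hr).2.1, fun r hr ↦ (hsol r hr).2.2.deriv⟩
end
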